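/- arXiv:2506.23965 — 9 statements merged into one kernel-verified Lean document; each statement's English description precedes it below -/
import Mathlib

section
/- For every integer n ≥ 1, the path graph on n vertices satisfies the neighbour sum property if and only if n ≡ 2 (mod 3). -/
/-!
The neighbour sum property of a finite graph says that `1` is an eigenvalue of its adjacency matrix.
Index the vertices of the path by `0, …, n - 1` and extend `f` by zero to the integers. Then
`A f = c f` reads `f (k + 1) = c f k - f (k - 1)` for `0 ≤ k < n`, with boundary values
`f (-1) = f n = 0`. This is the recurrence of the rescaled Chebyshev polynomials of the second kind,
so `f k = S k (c) f 0`, and `c` is an eigenvalue iff `S n (c) = 0`. At `c = 1` the sequence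
`S n (1)` is `1, 1, 0, -1, -1, 0, …`.
-/

/-- A locally finite simple graph satisfies the *neighbour sum property* if there is a
function `f : V → ℝ`, not identically zero, mapping every vertex to the sum of the
values taken by its neighbours. -/
def SimpleGraph.HasNSP {V : Type*} (G : SimpleGraph V) : Prop :=
  ∃ f : V → ℝ, f ≠ 0 ∧ ∀ x : V, f x = ∑ᶠ y ∈ G.neighborSet x, f y

/-- The path graph on `n` vertices `v_0, …, v_{n-1}`, where `v_i` is adjacent to
`v_{i+1}` and there are no other adjacencies. -/
def pathGraph' (n : ℕ) : SimpleGraph (Fin n) :=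
  SimpleGraph.fromRel (fun i j => (i : ℕ) + 1 = (j : ℕ))

open Matrix Module.End Polynomial Polynomial.Chebyshev SimpleGraph

theorem hasNSP_iff_hasEigenvalue_adjMatrix_one {V : Type*} [Fintype V] [DecidableEq V]
    (G : SimpleGraph V) [DecidableRel G.Adj] :
    G.HasNSP ↔ HasEigenvalue (toLin' (G.adjMatrix ℝ)) 1 := by
  have mulVec_eq_finsum (f : V → ℝ) (x : V) :
      (G.adjMatrix ℝ *ᵥ f) x = ∑ᶠ y ∈ G.neighborSet x, f y := by
    rw [adjMatrix_mulVec_apply, ← finsum_mem_coe_finset, coe_neighborFinset]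
  calc G.HasNSP
      ↔ ∃ f, HasEigenvector (toLin' (G.adjMatrix ℝ)) 1 f := exists_congr fun f ↦ by
        rw [hasEigenvector_iff, mem_eigenspace_iff, toLin'_apply, one_smul, and_comm, eq_comm,
          funext_iff]
        simp only [mulVec_eq_finsum]
    _ ↔ HasEigenvalue (toLin' (G.adjMatrix ℝ)) 1 :=
        ⟨fun ⟨_, hf⟩ ↦ hasEigenvalue_of_hasEigenvector hf, fun h ↦ h.exists_hasEigenvector⟩

theorem pathGraph'_eq_pathGraph (n : ℕ) : pathGraph' n = pathGraph n := by
  ext u v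
  rw [pathGraph', fromRel_adj, pathGraph_adj, and_iff_right_iff_imp]
  rintro h rfl
  omega

section AdjMatrix

variable {R : Type*} {n : ℕ}

theorem adjMatrix_pathGraph_mulVec_apply [NonAssocSemiring R] [DecidableRel (pathGraph n).Adj]
    {g : ℤ → R} (h_left : g (-1) = 0) (h_right : g n = 0) (x : Fin n) :
    ((pathGraph n).adjMatrix R *ᵥ fun y ↦ g y) x = g (x - 1) + g (x + 1) := by
  have h_mapsTo : Set.MapsTo (fun y : Fin n ↦ (y : ℤ)) ((pathGraph n).neighborFinset x)
      ({(x : ℤ) - 1, (x : ℤ) + 1} : Finset ℤ) := by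
    intro y hy
    rw [coe_neighborFinset, mem_neighborSet, pathGraph_adj] at hy
    simp only [Finset.mem_coe, Finset.mem_insert, Finset.mem_singleton]
    omega
  have h_zero : ∀ k ∈ ({(x : ℤ) - 1, (x : ℤ) + 1} : Finset ℤ),
      k ∉ (fun y : Fin n ↦ (y : ℤ)) '' (pathGraph n).neighborFinset x → g k = 0 := by
    intro k hk hk_image
    rw [Finset.mem_insert, Finset.mem_singleton] at hk
    have hk_range : ¬ (0 ≤ k ∧ k < n) := by
      rintro ⟨hk₀, hkn⟩
      lift k to ℕ using hk₀
      refine hk_image ⟨⟨k, by omega⟩, ?_, rfl⟩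
      rw [coe_neighborFinset, mem_neighborSet, pathGraph_adj]
      grind
    obtain rfl | rfl : k = -1 ∨ k = n := by omega
    exacts [h_left, h_right]
  calc ((pathGraph n).adjMatrix R *ᵥ fun y ↦ g y) x
      = ∑ y ∈ (pathGraph n).neighborFinset x, g y := adjMatrix_mulVec_apply ..
    _ = ∑ k ∈ {(x : ℤ) - 1, (x : ℤ) + 1}, g k :=
        Finset.sum_of_injOn _ (Nat.cast_injective.comp Fin.val_injective).injOn h_mapsTo h_zero
          fun _ _ ↦ rfl
    _ = g (x - 1) + g (x + 1) := Finset.sum_pair (by omega)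

theorem eq_chebyshevS_eval_smul_of_recurrence {M : Type*} [CommRing R] [AddCommGroup M]
    [Module R M] {c : R} {g : ℤ → M} (h_left : g (-1) = 0)
    (h_rec : ∀ k : ℕ, k < n → g (k - 1) + g (k + 1) = c • g k) {k : ℕ} (hk : k ≤ n) :
    g k = (S R k).eval c • g 0 := by
  induction k using Nat.twoStepInduction with
  | zero => simp
  | one => simpa [h_left] using h_rec 0 hk
  | more k ih₀ ih₁ =>
    have h_step : g k + g (k + 2) = c • g (k + 1) := by
      simpa [add_assoc, one_add_one_eq_two] using h_rec (k + 1) hk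
    push_cast at ih₁ ⊢
    rw [eq_sub_of_add_eq' h_step, ih₀ (by omega), ih₁ (by omega), S_add_two]
    simp only [eval_sub, eval_mul, eval_X, sub_smul, mul_smul]

theorem hasEigenvalue_adjMatrix_pathGraph_iff [CommRing R] [IsDomain R]
    [DecidableRel (pathGraph n).Adj] {c : R} :
    HasEigenvalue (toLin' ((pathGraph n).adjMatrix R)) c ↔ (S R n).IsRoot c := by
  constructor
  · intro h_eigenvalue
    obtain ⟨f, hf⟩ := h_eigenvalue.exists_hasEigenvector
    set g : ℤ → R := Function.extend (fun x : Fin n ↦ (x : ℤ)) f 0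
    have hg_coe (x : Fin n) : g x = f x :=
      (Nat.cast_injective.comp Fin.val_injective).extend_apply f 0 x
    have hg_left : g (-1) = 0 := Function.extend_apply' _ _ _ (by rintro ⟨x, hx⟩; omega)
    have hg_right : g n = 0 := Function.extend_apply' _ _ _ (by rintro ⟨x, hx⟩; omega)
    have hg_rec (k : ℕ) (hk : k < n) : g (k - 1) + g (k + 1) = c • g k := by
      rw [← adjMatrix_pathGraph_mulVec_apply hg_left hg_right ⟨k, hk⟩, hg_coe ⟨k, hk⟩,
        funext hg_coe]
      exact congrFun hf.apply_eq_smul ⟨k, hk⟩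
    have hg_eq {k : ℕ} (hk : k ≤ n) : g k = (S R k).eval c • g 0 :=
      eq_chebyshevS_eval_smul_of_recurrence hg_left hg_rec hk
    have hg_zero : g 0 ≠ 0 := fun h ↦ hf.2 <| funext fun x ↦ by
      rw [← hg_coe, hg_eq x.isLt.le, h, smul_zero, Pi.zero_apply]
    exact (smul_eq_zero.1 ((hg_eq le_rfl).symm.trans hg_right)).resolve_right hg_zero
  · intro h_root
    have hn : 0 < n := Nat.pos_of_ne_zero fun h ↦ by simp [h] at h_root
    refine hasEigenvalue_of_hasEigenvector (x := fun x : Fin n ↦ (S R x).eval c)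
      (hasEigenvector_iff.2 ⟨mem_eigenspace_iff.2 <| funext fun x ↦ ?_, fun h ↦ ?_⟩)
    · rw [toLin'_apply,
        adjMatrix_pathGraph_mulVec_apply (g := fun k ↦ (S R k).eval c) (by simp) h_root, S_add_one,
        eval_sub, eval_mul, eval_X, add_sub_cancel, Pi.smul_apply, smul_eq_mul]
    · simpa using congrFun h ⟨0, hn⟩

end AdjMatrix

theorem chebyshevS_eval_one_antiperiodic (R : Type*) [CommRing R] :
    Function.Antiperiodic (fun n : ℤ ↦ (S R n).eval 1) 3 := by
  intro n
  have h_eval (k : ℤ) : (S R (k + 2)).eval 1 = (S R (k + 1)).eval 1 - (S R k).eval 1 := by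
    rw [S_add_two, eval_sub, eval_mul, eval_X, one_mul]
  calc (S R (n + 3)).eval 1
      = (S R (n + 1 + 2)).eval 1 := by ring_nf
    _ = (S R (n + 2)).eval 1 - (S R (n + 1)).eval 1 := by
        rw [h_eval, add_assoc n, one_add_one_eq_two]
    _ = -(S R n).eval 1 := by rw [h_eval, sub_sub_cancel_left]

theorem chebyshevS_isRoot_one_iff {R : Type*} [CommRing R] [Nontrivial R] {n : ℤ} :
    (S R n).IsRoot 1 ↔ n % 3 = 2 := by
  have h_periodic : Function.Periodic (fun n : ℤ ↦ (S R n).IsRoot 1) 3 := fun n ↦ by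
    simp only [IsRoot.def, chebyshevS_eval_one_antiperiodic R n, neg_eq_zero]
  have h_mod : (S R n).IsRoot 1 ↔ (S R (n % 3)).IsRoot 1 := by
    have h := h_periodic.int_mul (n / 3) (n % 3)
    rwa [Int.cast_id, Int.emod_add_ediv_mul, eq_iff_iff] at h
  rw [h_mod]
  obtain h | h | h : n % 3 = 0 ∨ n % 3 = 1 ∨ n % 3 = 2 := by omega
  all_goals simp [h, S_two]

/-- For every `n ≥ 1`, the path graph on `n` vertices satisfies the neighbour sum
property if and only if `n ≡ 2 (mod 3)`. -/
theorem pathGraph_hasNSP_iff (n : ℕ) (hn : 1 ≤ n) :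
    (pathGraph' n).HasNSP ↔ n % 3 = 2 := by
  classical
  rw [pathGraph'_eq_pathGraph, hasNSP_iff_hasEigenvalue_adjMatrix_one,
    hasEigenvalue_adjMatrix_pathGraph_iff, chebyshevS_isRoot_one_iff]
  omega
end

section
/- Let d ≥ 1 and k ≥ 1 be integers and let T be a finite tree possessing a vertex v_0 such that: the degree of v_0 is d, every vertex other than v_0 has degree d+1 or degree 1, and every vertex of degree 1 other than v_0 lies at graph distance exactly k from v_0 (a level-symmetric tree L_{d,k}). Then T satisfies the neighbour sum property if and only if d = 1 and k ≡ 1 (mod 3). -/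
/-!
Let `a 0 = a 1 = 1` and `a (n + 2) = a (n + 1) - d * a n`. If `f` has the neighbour sum property
and `v` has height `h` above the leaves, then eliminating the values below `v`, level by level from
the leaves up, gives `a (h + 1) * f v = a h * f p` for the parent `p` of `v`, and
`a (k + 1) * f v₀ = 0` at the root.

Modulo `d` every `a n` is `1`, so no `a n` vanishes unless `d = 1`, when the sequence is
`1, 1, 0, -1, -1, 0, …`. A solution vanishing at the root vanishes identically: descending from the
root, `f v = 0` follows from `a (h + 1) * f v = a h * f p` if `d ≠ 1`, and from the equation at `p`,
whose only child is `v`, if `d = 1`.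
Hence a nonzero solution forces `a (k + 1) = 0`; conversely, `a (k + 1) = 0` makes
`v ↦ a (height of v)` a solution.
-/

namespace LevelSymmetricTree

theorem finsum_mem_const {α M : Type*} [AddCommMonoid M] {s : Set α} (hs : s.Finite) (m : M) :
    ∑ᶠ _ ∈ s, m = s.ncard • m := by
  rw [finsum_mem_eq_finite_toFinset_sum _ hs, Finset.sum_const, Set.ncard_eq_toFinset_card s hs]

/-- The sequence `a 0 = a 1 = 1`, `a (n + 2) = a (n + 1) - d * a n`. Up to scaling, `a h` is the
value at height `h` above the leaves of a solution that is constant on levels. -/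
def heightSeq (d : ℕ) : ℕ → ℤ
  | 0 => 1
  | 1 => 1
  | n + 2 => heightSeq d (n + 1) - d * heightSeq d n

theorem heightSeq_modEq_one (d : ℕ) : ∀ n, heightSeq d n ≡ 1 [ZMOD d]
  | 0 => rfl
  | 1 => rfl
  | n + 2 => by
    simpa only [heightSeq, zero_mul, sub_zero] using (heightSeq_modEq_one d (n + 1)).sub
      ((Int.modEq_zero_iff_dvd.2 dvd_rfl).mul_right (heightSeq d n))

theorem heightSeq_ne_zero {d : ℕ} (hd : d ≠ 1) (n : ℕ) : heightSeq d n ≠ 0 := by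
  intro h
  have hdvd : (d : ℤ) ∣ 1 := by simpa [h] using (heightSeq_modEq_one d n).dvd
  exact hd (by exact_mod_cast Int.eq_one_of_dvd_one (Int.natCast_nonneg d) hdvd)

theorem heightSeq_one_add_three (n : ℕ) : heightSeq 1 (n + 3) = -heightSeq 1 n := by
  simp only [heightSeq, Nat.cast_one]
  ring

theorem heightSeq_one_eq_zero_iff : ∀ n, heightSeq 1 n = 0 ↔ n % 3 = 2
  | 0 => by simp [heightSeq]
  | 1 => by simp [heightSeq]
  | 2 => by simp [heightSeq]
  | n + 3 => by
    rw [heightSeq_one_add_three, neg_eq_zero, heightSeq_one_eq_zero_iff n, Nat.add_mod_right]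

theorem heightSeq_eq_zero_iff {d n : ℕ} : heightSeq d n = 0 ↔ d = 1 ∧ n % 3 = 2 := by
  by_cases hd : d = 1
  · subst hd
    simpa only [true_and] using heightSeq_one_eq_zero_iff n
  · simp only [heightSeq_ne_zero hd, hd, false_and]

section Children

variable {V : Type*} {G : SimpleGraph V} {r v p q : V}

/-- The children of `v` when `G` is rooted at `r`: the neighbours of `v` one step farther from `r`.
That `p` is the parent of `v` is expressed by `v ∈ children G r p`. -/
def children (G : SimpleGraph V) (r v : V) : Set V :=
  {y | G.Adj v y ∧ G.dist r y = G.dist r v + 1}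

theorem exists_mem_children (hreach : G.Reachable r v) (hv : v ≠ r) :
    ∃ p, v ∈ children G r p := by
  obtain ⟨w, hw⟩ := hreach.exists_walk_length_eq_dist
  have hnil : ¬w.Nil := fun h => hv h.eq.symm
  have hadj := w.adj_penultimate hnil
  have hlt : G.dist r w.penultimate < G.dist r v := by
    have := SimpleGraph.dist_le w.dropLast
    have := SimpleGraph.Walk.length_dropLast_add_one hnil
    omega
  have := hadj.diff_dist_adj (u := r)
  exact ⟨w.penultimate, hadj, by omega⟩

theorem reachable_of_mem_children (hv : v ∈ children G r p) : G.Reachable r p :=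
  (SimpleGraph.Reachable.of_dist_ne_zero (by rw [hv.2]; exact Nat.succ_ne_zero _)).trans
    hv.1.symm.reachable

/-- Two parents of `v` would extend to two distinct shortest paths from `r` to `v`. -/
theorem eq_of_mem_children (hG : G.IsAcyclic) (hp : v ∈ children G r p)
    (hq : v ∈ children G r q) : p = q := by
  obtain ⟨w, hw⟩ := (reachable_of_mem_children hp).exists_walk_length_eq_dist
  obtain ⟨u, hu⟩ := (reachable_of_mem_children hq).exists_walk_length_eq_dist
  have hwp : (w.concat hp.1).IsPath :=
    SimpleGraph.Walk.isPath_of_length_eq_dist _ (by rw [w.length_concat, hw, hp.2])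
  have huq : (u.concat hq.1).IsPath :=
    SimpleGraph.Walk.isPath_of_length_eq_dist _ (by rw [u.length_concat, hu, hq.2])
  have hpath := congrArg Subtype.val ((hG.subsingleton_path r v).elim ⟨_, hwp⟩ ⟨_, huq⟩)
  simpa using congrArg SimpleGraph.Walk.penultimate hpath

theorem notMem_children_of_mem_children (hv : v ∈ children G r p) : p ∉ children G r v := by
  intro hp
  have := hv.2
  have := hp.2
  omega

theorem neighborSet_eq_insert_children (hG : G.IsAcyclic) (hv : v ∈ children G r p) :
    G.neighborSet v = insert p (children G r v) := by
  ext y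
  refine ⟨fun hy => ?_, ?_⟩
  · have hreach := (reachable_of_mem_children hv).trans hv.1.reachable
    rcases hG.dist_eq_dist_add_one_of_adj_of_reachable r hy hreach with hup | hdown
    · exact Or.inl (eq_of_mem_children hG ⟨hy.symm, hup⟩ hv)
    · exact Or.inr ⟨hy, hdown⟩
  · rintro (rfl | hy)
    exacts [hv.1.symm, hy.1]

theorem children_root (r : V) : children G r r = G.neighborSet r := by
  ext y
  simp only [children, SimpleGraph.dist_self, zero_add, SimpleGraph.dist_eq_one_iff_adj, and_self,
    Set.mem_ofPred_eq, SimpleGraph.mem_neighborSet]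

theorem ncard_neighborSet_eq_ncard_children_add_one [Finite V] (hG : G.IsAcyclic)
    (hv : v ∈ children G r p) : (G.neighborSet v).ncard = (children G r v).ncard + 1 := by
  rw [neighborSet_eq_insert_children hG hv,
    Set.ncard_insert_of_notMem (notMem_children_of_mem_children hv)]

end Children

section NeighbourSum

variable {V M : Type*} {G : SimpleGraph V}

/-- `f` solves the equations of the neighbour sum property, with values in any additive monoid. -/
def IsNeighbourSum [AddCommMonoid M] (G : SimpleGraph V) (f : V → M) : Prop :=
  ∀ x, f x = ∑ᶠ y ∈ G.neighborSet x, f y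

theorem isNeighbourSum_iff [AddCommMonoid M] [Finite V] (hG : G.IsTree) (r : V) {f : V → M} :
    IsNeighbourSum G f ↔ f r = ∑ᶠ y ∈ children G r r, f y ∧
      ∀ p, ∀ v ∈ children G r p, f v = f p + ∑ᶠ y ∈ children G r v, f y := by
  have hsplit {p v : V} (hv : v ∈ children G r p) :
      ∑ᶠ y ∈ G.neighborSet v, f y = f p + ∑ᶠ y ∈ children G r v, f y := by
    rw [neighborSet_eq_insert_children hG.isAcyclic hv,
      finsum_mem_insert f (notMem_children_of_mem_children hv) (Set.toFinite _)]
  rw [children_root]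
  refine ⟨fun hf => ⟨hf r, fun p v hv => hsplit hv ▸ hf v⟩, fun ⟨hroot, hchild⟩ v => ?_⟩
  by_cases hv : v = r
  · rw [hv, ← hroot]
  · obtain ⟨p, hp⟩ := exists_mem_children (hG.connected r v) hv
    rw [hsplit hp, ← hchild p v hp]

theorem IsNeighbourSum.finsum_children_eq_zero [AddCommMonoid M] [Finite V] (hG : G.IsTree)
    {f : V → M} (hf : IsNeighbourSum G f) {r p : V}
    (hzero : ∀ u, G.dist r u ≤ G.dist r p → f u = 0) : ∑ᶠ y ∈ children G r p, f y = 0 := by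
  obtain ⟨hroot, hchild⟩ := (isNeighbourSum_iff hG r).1 hf
  by_cases hp : p = r
  · subst hp
    rw [← hroot, hzero p le_rfl]
  · obtain ⟨g, hg⟩ := exists_mem_children (hG.connected r p) hp
    have hgp : G.dist r g ≤ G.dist r p := by rw [hg.2]; exact Nat.le_succ _
    simpa only [hzero p le_rfl, hzero g hgp, zero_add, eq_comm] using hchild g p hg

end NeighbourSum

/-- The tree `L_{d,k}` with root `r`, described by levels: no vertex lies below level `k`, and every
vertex above level `k` has exactly `d` children. -/
structure IsLevelSymmetric {V : Type*} (G : SimpleGraph V) (r : V) (d k : ℕ) : Prop where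
  isTree : G.IsTree
  dist_le (v : V) : G.dist r v ≤ k
  ncard_children {v : V} (hv : G.dist r v < k) : (children G r v).ncard = d

namespace IsLevelSymmetric

variable {V M : Type*} {G : SimpleGraph V} {r : V} {d k : ℕ}

theorem of_ncard_neighborSet [Finite V] (hT : G.IsTree) (hroot : (G.neighborSet r).ncard = d)
    (hdeg : ∀ v, v ≠ r → (G.neighborSet v).ncard = d + 1 ∨ (G.neighborSet v).ncard = 1)
    (hleaf : ∀ v, v ≠ r → (G.neighborSet v).ncard = 1 → G.dist r v = k) :
    IsLevelSymmetric G r d k where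
  isTree := hT
  dist_le v := by
    have : Nonempty V := ⟨r⟩
    obtain ⟨m, hm⟩ := Finite.exists_max (G.dist r)
    refine (hm v).trans ?_
    by_cases hmr : m = r
    · simp [hmr]
    obtain ⟨p, hp⟩ := exists_mem_children (hT.connected r m) hmr
    have hempty : children G r m = ∅ :=
      Set.eq_empty_of_forall_notMem fun y hy => by
        have := hm y
        have := hy.2
        omega
    refine (hleaf m hmr ?_).le
    rw [ncard_neighborSet_eq_ncard_children_add_one hT.isAcyclic hp, hempty, Set.ncard_empty]
  ncard_children {v} hv := by
    by_cases hvr : v = r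
    · rw [hvr, children_root, hroot]
    obtain ⟨p, hp⟩ := exists_mem_children (hT.connected r v) hvr
    have hcard := ncard_neighborSet_eq_ncard_children_add_one hT.isAcyclic hp
    rcases hdeg v hvr with hinner | hend
    · omega
    · exact absurd (hleaf v hvr hend) hv.ne

theorem children_eq_empty (hG : IsLevelSymmetric G r d k) {v : V} (hv : G.dist r v = k) :
    children G r v = ∅ :=
  Set.eq_empty_of_forall_notMem fun y hy => by
    have := hG.dist_le y
    have := hy.2
    omega

variable [AddCommGroup M] [Finite V]

theorem heightSeq_smul (hG : IsLevelSymmetric G r d k) {f : V → M} (hf : IsNeighbourSum G f)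
    {h : ℕ} {v : V} (hv : G.dist r v + h = k) :
    heightSeq d (h + 1) • f v = heightSeq d h • (f v - ∑ᶠ y ∈ children G r v, f y) := by
  obtain ⟨-, hparent⟩ := (isNeighbourSum_iff hG.isTree r).1 hf
  induction h generalizing v with
  | zero => simp [hG.children_eq_empty hv, heightSeq]
  | succ h ih =>
    have hchild {y : V} (hy : y ∈ children G r v) :
        heightSeq d (h + 1) • f y = heightSeq d h • f v := by
      have hheight : G.dist r y + h = k := by rw [hy.2, add_right_comm, add_assoc, hv]
      rw [ih hheight, sub_eq_of_eq_add (hparent v y hy)]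
    have hsum : heightSeq d (h + 1) • ∑ᶠ y ∈ children G r v, f y =
        (d : ℤ) • heightSeq d h • f v := by
      rw [smul_finsum_mem (Set.toFinite _), finsum_mem_congr rfl fun y hy => hchild hy,
        finsum_mem_const (Set.toFinite _), hG.ncard_children (by omega), natCast_zsmul]
    rw [heightSeq, smul_sub, hsum]
    module

theorem heightSeq_smul_root (hG : IsLevelSymmetric G r d k) {f : V → M}
    (hf : IsNeighbourSum G f) : heightSeq d (k + 1) • f r = 0 := by
  have hroot : G.dist r r + k = k := by rw [SimpleGraph.dist_self, zero_add]
  rw [hG.heightSeq_smul hf hroot, ← ((isNeighbourSum_iff hG.isTree r).1 hf).1, sub_self, smul_zero]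

theorem heightSeq_smul_of_mem_children (hG : IsLevelSymmetric G r d k) {f : V → M}
    (hf : IsNeighbourSum G f) {h : ℕ} {p v : V} (hv : v ∈ children G r p)
    (hh : G.dist r v + h = k) : heightSeq d (h + 1) • f v = heightSeq d h • f p := by
  rw [hG.heightSeq_smul hf hh,
    sub_eq_of_eq_add (((isNeighbourSum_iff hG.isTree r).1 hf).2 p v hv)]

theorem eq_zero_of_root_eq_zero [IsAddTorsionFree M] (hG : IsLevelSymmetric G r d k) {f : V → M}
    (hf : IsNeighbourSum G f) (hroot : f r = 0) : f = 0 := by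
  suffices ∀ n v, G.dist r v = n → f v = 0 from funext fun v => this _ v rfl
  intro n
  induction n using Nat.strong_induction_on with
  | _ n ih =>
    rintro v rfl
    by_cases hv : v = r
    · rw [hv, hroot]
    obtain ⟨p, hp⟩ := exists_mem_children (hG.isTree.connected r v) hv
    have hlt : G.dist r p < G.dist r v := by have := hp.2; omega
    by_cases hd : d = 1
    · have hcard := (hG.ncard_children (hlt.trans_le (hG.dist_le v))).trans hd
      obtain ⟨c, hc⟩ := Set.ncard_eq_one.1 hcard
      have hsum := hf.finsum_children_eq_zero hG.isTree fun u hu => ih _ (hu.trans_lt hlt) u rfl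
      obtain rfl : v = c := by simpa [hc] using hp
      rwa [hc, finsum_mem_singleton] at hsum
    · obtain ⟨h, hh⟩ := Nat.exists_eq_add_of_le (hG.dist_le v)
      have hmul := hG.heightSeq_smul_of_mem_children hf hp hh.symm
      rw [ih _ hlt p rfl, smul_zero] at hmul
      exact (smul_eq_zero.1 hmul).resolve_left (heightSeq_ne_zero hd _)

theorem finsum_children_heightSeq (hG : IsLevelSymmetric G r d k) (m : M) (v : V) :
    ∑ᶠ y ∈ children G r v, heightSeq d (k - G.dist r y) • m =
      (heightSeq d (k - G.dist r v) - heightSeq d (k - G.dist r v + 1)) • m := by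
  obtain ⟨h, hh⟩ := Nat.exists_eq_add_of_le (hG.dist_le v)
  rw [show k - G.dist r v = h by omega]
  cases h with
  | zero => simp [hG.children_eq_empty hh.symm, heightSeq]
  | succ h =>
    have hlevel : ∀ y ∈ children G r v,
        heightSeq d (k - G.dist r y) • m = heightSeq d h • m := fun y hy => by
      rw [show k - G.dist r y = h by have := hy.2; omega]
    rw [finsum_mem_congr rfl hlevel, finsum_mem_const (Set.toFinite _),
      hG.ncard_children (by omega), heightSeq]
    module

theorem isNeighbourSum_heightSeq (hG : IsLevelSymmetric G r d k)
    (hzero : heightSeq d (k + 1) = 0) (m : M) :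
    IsNeighbourSum G fun v => heightSeq d (k - G.dist r v) • m := by
  refine (isNeighbourSum_iff hG.isTree r).2 ⟨?_, fun p v hv => ?_⟩
  · rw [hG.finsum_children_heightSeq, SimpleGraph.dist_self, tsub_zero, hzero, sub_zero]
  · have hheight : k - G.dist r p = k - G.dist r v + 1 := by
      have := hG.dist_le v
      have := hv.2
      omega
    rw [hG.finsum_children_heightSeq, hheight]
    module

theorem exists_isNeighbourSum_iff [IsAddTorsionFree M] [Nontrivial M]
    (hG : IsLevelSymmetric G r d k) :
    (∃ f : V → M, f ≠ 0 ∧ IsNeighbourSum G f) ↔ heightSeq d (k + 1) = 0 := by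
  refine ⟨fun ⟨f, hf0, hf⟩ => ?_, fun hzero => ?_⟩
  · have hroot : f r ≠ 0 := fun h => hf0 (hG.eq_zero_of_root_eq_zero hf h)
    exact (smul_eq_zero.1 (hG.heightSeq_smul_root hf)).resolve_right hroot
  · obtain ⟨m, hm⟩ := exists_ne (0 : M)
    have hk : heightSeq d k ≠ 0 := by
      rw [Ne, heightSeq_eq_zero_iff]
      have := heightSeq_eq_zero_iff.1 hzero
      omega
    refine ⟨_, fun h => smul_ne_zero hk hm ?_, hG.isNeighbourSum_heightSeq hzero m⟩
    simpa using congrFun h r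

end IsLevelSymmetric

end LevelSymmetricTree

open LevelSymmetricTree in
theorem levelSymmetricTree_hasNSP_iff_general {V M : Type*} [Finite V] [AddCommGroup M]
    [IsAddTorsionFree M] [Nontrivial M] (G : SimpleGraph V) (d k : ℕ) (hT : G.IsTree) (v₀ : V)
    (hdeg₀ : (G.neighborSet v₀).ncard = d)
    (hdeg : ∀ v : V, v ≠ v₀ →
      (G.neighborSet v).ncard = d + 1 ∨ (G.neighborSet v).ncard = 1)
    (hleaf : ∀ v : V, v ≠ v₀ → (G.neighborSet v).ncard = 1 → G.dist v₀ v = k) :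
    (∃ f : V → M, f ≠ 0 ∧ ∀ x : V, f x = ∑ᶠ y ∈ G.neighborSet x, f y) ↔ d = 1 ∧ k % 3 = 1 := by
  have hG : IsLevelSymmetric G v₀ d k := .of_ncard_neighborSet hT hdeg₀ hdeg hleaf
  have hmod : (k + 1) % 3 = 2 ↔ k % 3 = 1 := by omega
  rw [← hmod, ← heightSeq_eq_zero_iff]
  exact hG.exists_isNeighbourSum_iff

/-- A level-symmetric tree `L_{d,k}` (a finite tree with a root `v₀` of degree `d`,
all other vertices of degree `d+1` or `1`, and all leaves other than `v₀` at distance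
exactly `k` from `v₀`) satisfies the neighbour sum property if and only if `d = 1` and
`k ≡ 1 (mod 3)`. -/
theorem levelSymmetricTree_hasNSP_iff {V : Type*} [Fintype V] (G : SimpleGraph V)
    (d k : ℕ) (hd : 1 ≤ d) (hk : 1 ≤ k) (hT : G.IsTree) (v₀ : V)
    (hdeg₀ : (G.neighborSet v₀).ncard = d)
    (hdeg : ∀ v : V, v ≠ v₀ →
      (G.neighborSet v).ncard = d + 1 ∨ (G.neighborSet v).ncard = 1)
    (hleaf : ∀ v : V, v ≠ v₀ → (G.neighborSet v).ncard = 1 → G.dist v₀ v = k) :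
    G.HasNSP ↔ d = 1 ∧ k % 3 = 1 :=
  levelSymmetricTree_hasNSP_iff_general G d k hT v₀ hdeg₀ hdeg hleaf
end

section
/- For every integer d ≥ 1, there exists a finite tree T = (V, E) such that the set of all functions f : V → ℝ satisfying f(x) = Σ_{y adjacent to x} f(y) for every vertex x is a real vector subspace of ℝ^V of dimension exactly d. -/
/-!
The tree is a spider: a centre `c` with `d + 1` legs `c — aᵢ — bᵢ` of length two.
At the leaf `bᵢ` the equation says `f bᵢ = f aᵢ`; at `aᵢ` it says `f aᵢ = f c + f bᵢ`, so
`f c = 0`; at the centre it then says `∑ᵢ f aᵢ = 0`. Hence a solution is the same as a vector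
`(f aᵢ)ᵢ` of length `d + 1` with vanishing coordinate sum, and such a vector is determined by
`d` freely chosen coordinates.
-/

section SolutionSpace

variable (R M : Type*) [Semiring R] [AddCommMonoid M] [Module R M] {V W : Type*}

/-- The space of `M`-valued functions on the vertices of a finite graph whose value at each vertex
is the sum of the values at its neighbours, i.e. the eigenspace of the adjacency operator for the
eigenvalue `1`. A `finsum` is used so that no decidability of adjacency is needed. -/
def solutionSpace [Finite V] (G : SimpleGraph V) : Submodule R (V → M) where
  carrier := {f | ∀ x, f x = ∑ᶠ y ∈ G.neighborSet x, f y}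
  zero_mem' x := by simp
  add_mem' {f g} hf hg x := by
    simp only [Pi.add_apply]
    rw [finsum_mem_add_distrib (Set.toFinite _), ← hf x, ← hg x]
  smul_mem' r f hf x := by
    simp only [Pi.smul_apply]
    rw [← smul_finsum_mem (Set.toFinite _), ← hf x]

variable {R M}

lemma mem_solutionSpace_iff [Finite V] {G : SimpleGraph V} {f : V → M} :
    f ∈ solutionSpace R M G ↔ ∀ x, f x = ∑ᶠ y ∈ G.neighborSet x, f y :=
  Iff.rfl

lemma comp_iso_mem_solutionSpace_iff [Finite V] [Finite W] {G : SimpleGraph V}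
    {H : SimpleGraph W} (φ : G ≃g H) {f : W → M} :
    f ∘ φ ∈ solutionSpace R M G ↔ f ∈ solutionSpace R M H := by
  have neighbor_sum (x : V) :
      ∑ᶠ w ∈ H.neighborSet (φ x), f w = ∑ᶠ y ∈ G.neighborSet x, f (φ y) := by
    rw [← finsum_comp_equiv φ.toEquiv]
    simp [φ.map_adj_iff]
  rw [mem_solutionSpace_iff, mem_solutionSpace_iff, ← φ.toEquiv.forall_congr_right]
  exact forall_congr' fun x => (neighbor_sum x).symm.congr_right

variable (R M) in
/-- The isomorphism of solution spaces `f ↦ f ∘ φ` induced by a graph isomorphism `φ`. -/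
def solutionSpaceCongr [Finite V] [Finite W] {G : SimpleGraph V} {H : SimpleGraph W}
    (φ : G ≃g H) : solutionSpace R M H ≃ₗ[R] solutionSpace R M G :=
  LinearEquiv.ofEq _ _ (Submodule.ext fun _ => (comp_iso_mem_solutionSpace_iff φ).symm) ≪≫ₗ
    (LinearEquiv.funCongrLeft R M φ.toEquiv).ofSubmodule' (solutionSpace R M G)

end SolutionSpace

section ZeroSum

/-- The vectors with vanishing coordinate sum. -/
def zeroSumSpace (R M ι : Type*) [Semiring R] [AddCommMonoid M] [Module R M] [Fintype ι] :
    Submodule R (ι → M) where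
  carrier := {g | ∑ i, g i = 0}
  zero_mem' := by simp
  add_mem' {g h} hg hh := by simp_all [Finset.sum_add_distrib]
  smul_mem' r g hg := by simp_all [← Finset.smul_sum]

lemma mem_zeroSumSpace_iff {R M ι : Type*} [Semiring R] [AddCommMonoid M] [Module R M] [Fintype ι]
    {g : ι → M} : g ∈ zeroSumSpace R M ι ↔ ∑ i, g i = 0 :=
  Iff.rfl

/-- A vector with vanishing coordinate sum is determined by all its coordinates but the first. -/
def zeroSumSpaceEquiv (R M : Type*) [Semiring R] [AddCommGroup M] [Module R M] (d : ℕ) :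
    zeroSumSpace R M (Fin (d + 1)) ≃ₗ[R] (Fin d → M) where
  toFun g := Fin.tail g.1
  map_add' _ _ := rfl
  map_smul' _ _ := rfl
  invFun h := ⟨Fin.cons (-∑ i, h i) h, by simp [mem_zeroSumSpace_iff, Fin.sum_univ_succ]⟩
  left_inv := by
    rintro ⟨g, hg⟩
    rw [mem_zeroSumSpace_iff, Fin.sum_univ_succ] at hg
    have head_eq : -∑ i, Fin.tail g i = g 0 := (eq_neg_of_add_eq_zero_left hg).symm
    have cons_eq : Fin.cons (-∑ i, Fin.tail g i) (Fin.tail g) = g := by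
      rw [head_eq, Fin.cons_self_tail]
    exact Subtype.ext cons_eq
  right_inv h := Fin.tail_cons _ _

end ZeroSum

section Spider

variable {R M ι : Type*}

/-- The vertices of the spider with legs indexed by `ι`: `none` is the centre, `some (.inl i)` the
middle vertex and `some (.inr i)` the leaf of the leg `i`. -/
abbrev SpiderVertex (ι : Type*) : Type _ := Option (ι ⊕ ι)

/-- The neighbour of a non-central vertex that is closer to the centre. -/
def spiderParent : ι ⊕ ι → SpiderVertex ι
  | .inl _ => none
  | .inr i => some (.inl i)

/-- The edge joining a non-central vertex to its parent. -/
def spiderEdge (w : ι ⊕ ι) : Sym2 (SpiderVertex ι) := s(some w, spiderParent w)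

/-- The spider whose legs, all of length two, are indexed by `ι`. -/
def spider (ι : Type*) : SimpleGraph (SpiderVertex ι) :=
  SimpleGraph.fromEdgeSet (Set.range spiderEdge)

lemma spiderEdge_injective : Function.Injective (spiderEdge (ι := ι)) := by
  rintro (i | i) (j | j) h <;> simp_all [spiderEdge, spiderParent]

lemma spider_adj_parent (w : ι ⊕ ι) : (spider ι).Adj (some w) (spiderParent w) := by
  rw [spider, SimpleGraph.fromEdgeSet_adj]
  refine ⟨⟨w, rfl⟩, ?_⟩
  rcases w with i | i <;> simp [spiderParent]

lemma spider_edgeSet : (spider ι).edgeSet = Set.range spiderEdge := by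
  rw [spider, SimpleGraph.edgeSet_fromEdgeSet, sdiff_eq_left, Set.disjoint_left]
  rintro _ ⟨w, rfl⟩ h
  exact (spider_adj_parent w).ne (by simpa [spiderEdge] using h)

lemma spider_connected : (spider ι).Connected := by
  rw [SimpleGraph.connected_iff_exists_forall_reachable]
  have middle_reachable (i : ι) : (spider ι).Reachable none (some (.inl i)) :=
    (spider_adj_parent (.inl i)).symm.reachable
  refine ⟨none, ?_⟩
  rintro (_ | i | i)
  · exact SimpleGraph.Reachable.refl _
  · exact middle_reachable i
  · exact (middle_reachable i).trans (spider_adj_parent (.inr i)).symm.reachable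

lemma spider_isTree [Finite ι] : (spider ι).IsTree := by
  rw [SimpleGraph.isTree_iff_connected_and_card, spider_edgeSet,
    Nat.card_range_of_injective spiderEdge_injective]
  exact ⟨spider_connected, Finite.card_option.symm⟩

lemma spider_neighborSet_center :
    (spider ι).neighborSet none = Set.range fun i => some (.inl i) := by
  ext (_ | i | i) <;> simp [spider, spiderEdge, spiderParent]

lemma spider_neighborSet_middle (i : ι) :
    (spider ι).neighborSet (some (.inl i)) = {none, some (.inr i)} := by
  ext (_ | j | j) <;> simp [spider, spiderEdge, spiderParent, eq_comm]

lemma spider_neighborSet_leaf (i : ι) :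
    (spider ι).neighborSet (some (.inr i)) = {some (.inl i)} := by
  ext (_ | j | j) <;> simp [spider, spiderEdge, spiderParent, eq_comm]

lemma mem_solutionSpace_spider_iff_forall [Semiring R] [AddCommMonoid M] [Module R M] [Fintype ι]
    {f : SpiderVertex ι → M} :
    f ∈ solutionSpace R M (spider ι) ↔
      f none = ∑ i, f (some (.inl i)) ∧
      (∀ i, f (some (.inl i)) = f none + f (some (.inr i))) ∧
      ∀ i, f (some (.inr i)) = f (some (.inl i)) := by
  have middle_injective : Function.Injective fun i : ι => (some (.inl i) : SpiderVertex ι) :=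
    (Option.some_injective _).comp Sum.inl_injective
  simp only [mem_solutionSpace_iff, Option.forall, Sum.forall, spider_neighborSet_center,
    spider_neighborSet_middle, spider_neighborSet_leaf, finsum_mem_range middle_injective,
    finsum_mem_singleton, finsum_mem_pair (Option.some_ne_none _).symm]
  rw [finsum_eq_sum_of_fintype]

lemma mem_solutionSpace_spider_iff [Semiring R] [AddCancelCommMonoid M] [Module R M] [Fintype ι]
    [Nonempty ι] {f : SpiderVertex ι → M} :
    f ∈ solutionSpace R M (spider ι) ↔
      f none = 0 ∧ ∑ i, f (some (.inl i)) = 0 ∧ ∀ i, f (some (.inr i)) = f (some (.inl i)) := by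
  rw [mem_solutionSpace_spider_iff_forall]
  constructor
  · rintro ⟨center, middle, leaf⟩
    have center_eq_zero : f none = 0 := by
      obtain ⟨i⟩ := ‹Nonempty ι›
      simpa [leaf i] using middle i
    exact ⟨center_eq_zero, center.symm.trans center_eq_zero, leaf⟩
  · rintro ⟨center_eq_zero, sum_eq_zero, leaf⟩
    exact ⟨center_eq_zero.trans sum_eq_zero.symm, fun i => by simp [center_eq_zero, leaf i], leaf⟩

/-- A solution on a spider is determined by its values at the middle vertices, which can be any
vector with vanishing coordinate sum. -/
def spiderSolutionSpaceEquiv (R M ι : Type*) [Semiring R] [AddCancelCommMonoid M] [Module R M]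
    [Fintype ι] [Nonempty ι] : solutionSpace R M (spider ι) ≃ₗ[R] zeroSumSpace R M ι where
  toFun f := ⟨fun i => f.1 (some (.inl i)), (mem_solutionSpace_spider_iff.mp f.2).2.1⟩
  map_add' _ _ := rfl
  map_smul' _ _ := rfl
  invFun g := ⟨fun v => v.elim 0 (Sum.elim g.1 g.1),
    mem_solutionSpace_spider_iff.mpr ⟨rfl, g.2, fun _ => rfl⟩⟩
  left_inv := by
    rintro ⟨f, hf⟩
    obtain ⟨center_eq_zero, -, leaf⟩ := mem_solutionSpace_spider_iff.mp hf
    ext (_ | i | i)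
    · exact center_eq_zero.symm
    · rfl
    · exact (leaf i).symm
  right_inv _ := rfl

end Spider

theorem exists_tree_solutionSpace_dim_general (R M : Type*) [Semiring R] [AddCommGroup M]
    [Module R M] (d : ℕ) :
    ∃ (n : ℕ) (G : SimpleGraph (Fin n)),
      G.IsTree ∧ Nonempty (solutionSpace R M G ≃ₗ[R] (Fin d → M)) := by
  let e := Finite.equivFin (SpiderVertex (Fin (d + 1)))
  let φ : (spider (Fin (d + 1))).comap e.symm ≃g spider (Fin (d + 1)) :=
    SimpleGraph.Iso.comap e.symm _
  exact ⟨_, _, φ.isTree_iff.mpr spider_isTree,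
    ⟨(solutionSpaceCongr R M φ).symm ≪≫ₗ spiderSolutionSpaceEquiv R M (Fin (d + 1)) ≪≫ₗ
      zeroSumSpaceEquiv R M d⟩⟩

/-- For every `d ≥ 1` there is a finite tree `T` for which the set of all functions
`f : V → ℝ` satisfying `f x = Σ_{y adjacent to x} f y` at every vertex `x` is a real
vector subspace of `ℝ^V` of dimension exactly `d`. -/
theorem exists_tree_solutionSpace_dim (d : ℕ) (hd : 1 ≤ d) :
    ∃ (n : ℕ) (G : SimpleGraph (Fin n)) (S : Submodule ℝ (Fin n → ℝ)),
      G.IsTree ∧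
      (S : Set (Fin n → ℝ)) =
        {f : Fin n → ℝ | ∀ x : Fin n, f x = ∑ᶠ y ∈ G.neighborSet x, f y} ∧
      Module.finrank ℝ S = d := by
  obtain ⟨n, G, hG, ⟨e⟩⟩ := exists_tree_solutionSpace_dim_general ℝ ℝ d
  exact ⟨n, G, solutionSpace ℝ ℝ G, hG, rfl, e.finrank_eq.trans (Module.finrank_fin_fun ℝ)⟩
end

section
/- Let G = (V, E) be a finite tree containing five distinct vertices v_1, v_2, v_3, v_4, v_5 such that the neighbourhood of v_1 is exactly {v_2}, the neighbourhood of v_2 is exactly {v_1, v_3}, the neighbourhood of v_4 is exactly {v_3, v_5}, and the neighbourhood of v_5 is exactly {v_4}. Then G satisfies the neighbour sum property. -/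
open Finsupp

section NeighborSum

variable {V : Type*} (G : SimpleGraph V)

/-- The adjacency operator of `G`, sending `f` to the function whose value at a vertex is the sum of
`f` over its neighbours. Its domain is restricted to finitely supported functions so that it is
additive without any finiteness assumption on `G`. -/
noncomputable def neighborSum {M : Type*} [AddCommMonoid M] : (V →₀ M) →+ (V → M) where
  toFun f x := ∑ᶠ y ∈ G.neighborSet x, f y
  map_zero' := funext fun x ↦ finsum_mem_zero (G.neighborSet x)
  map_add' f g := funext fun _ ↦ finsum_mem_add_distrib'
    (f.hasFiniteSupport.inter_of_right _) (g.hasFiniteSupport.inter_of_right _)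

theorem neighborSum_apply {M : Type*} [AddCommMonoid M] (f : V →₀ M) (x : V) :
    neighborSum G f x = ∑ᶠ y ∈ G.neighborSet x, f y :=
  rfl

theorem neighborSum_single {M : Type*} [AddCommMonoid M] (v : V) (m : M) :
    neighborSum G (single v m) = (G.neighborSet v).indicator fun _ ↦ m := by
  classical
  ext x
  rw [neighborSum_apply, finsum_mem_def, finsum_eq_single _ v fun y hy ↦ by simp [hy]]
  simp [Set.indicator_apply, G.adj_comm]

variable {G}

theorem hasNSP_of_neighborSum_eq_self {f : V →₀ ℝ} (hf : f ≠ 0) (hfix : neighborSum G f = f) :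
    G.HasNSP :=
  ⟨f, DFunLike.coe_injective.ne hf, fun x ↦ (congrFun hfix x).symm⟩

theorem hasNSP_of_neighborSum_eq_add {f g : V →₀ ℝ} {d : V → ℝ} (hne : f ≠ g)
    (hf : neighborSum G f = f + d) (hg : neighborSum G g = g + d) : G.HasNSP := by
  refine hasNSP_of_neighborSum_eq_self (sub_ne_zero.mpr hne) ?_
  rw [map_sub, hf, hg, add_sub_add_right_eq_sub, coe_sub]

end NeighborSum

/-- A pendant path `a - b - w` with two edges, attached to the rest of `G` at `w`: the leaf `a` and
the middle vertex `b` have no neighbours outside the path, whereas `w` is unconstrained. The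
condition `a ≠ w` excludes the case where `{a, b}` spans a connected component of `G`. -/
structure IsPendantTwoPath {V : Type*} (G : SimpleGraph V) (a b w : V) : Prop where
  neighborSet_leaf : G.neighborSet a = {b}
  neighborSet_middle : G.neighborSet b = {a, w}
  leaf_ne_attachment : a ≠ w

namespace IsPendantTwoPath

variable {V : Type*} {G : SimpleGraph V} {a b a' b' w : V}

theorem leaf_ne_middle (h : IsPendantTwoPath G a b w) : a ≠ b := by
  have hab : G.Adj a b := by simp [← G.mem_neighborSet, h.neighborSet_leaf]
  exact hab.ne

theorem leaf_ne_middle_of_same_attachment (h : IsPendantTwoPath G a b w)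
    (h' : IsPendantTwoPath G a' b' w) : a ≠ b' := by
  rintro rfl
  have hsub : (G.neighborSet a).Subsingleton := by
    rw [h.neighborSet_leaf]
    exact Set.subsingleton_singleton
  have haw : a' = w :=
    hsub (by simp [h'.neighborSet_middle]) (by simp [h'.neighborSet_middle])
  exact h'.leaf_ne_attachment haw

theorem neighborSum_single_add_single {M : Type*} [AddCommMonoid M]
    (h : IsPendantTwoPath G a b w) (m : M) :
    neighborSum G (single a m + single b m) = ⇑(single a m + single b m) + ⇑(single w m) := by
  have hdisj : Disjoint ({a} : Set V) {w} := Set.disjoint_singleton.mpr h.leaf_ne_attachment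
  rw [map_add, neighborSum_single, neighborSum_single, h.neighborSet_leaf, h.neighborSet_middle,
    Set.insert_eq a, Set.indicator_union_of_disjoint hdisj]
  simp only [set_indicator_singleton]
  ext x
  simp only [coe_add, Pi.add_apply]
  abel

theorem single_add_single_ne (h : IsPendantTwoPath G a b w) (h' : IsPendantTwoPath G a' b' w)
    (hne : a ≠ a') {M : Type*} [AddZeroClass M] {m : M} (hm : m ≠ 0) :
    single a m + single b m ≠ single a' m + single b' m := by
  intro heq
  have heval := DFunLike.congr_fun heq a
  simp [hne, h.leaf_ne_middle, h.leaf_ne_middle_of_same_attachment h', hm] at heval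

end IsPendantTwoPath

theorem tree_with_pendant_paths_hasNSP_general {V : Type*} {G : SimpleGraph V} {a b a' b' w : V}
    (h : IsPendantTwoPath G a b w) (h' : IsPendantTwoPath G a' b' w) (hne : a ≠ a') :
    G.HasNSP :=
  hasNSP_of_neighborSum_eq_add (h.single_add_single_ne h' hne one_ne_zero)
    (h.neighborSum_single_add_single 1) (h'.neighborSum_single_add_single 1)

/-- Any finite tree containing five distinct vertices `v₁, …, v₅` whose neighbourhoods
are exactly `{v₂}`, `{v₁, v₃}`, (unconstrained for `v₃`), `{v₃, v₅}` and `{v₄}`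
respectively satisfies the neighbour sum property. -/
theorem tree_with_pendant_paths_hasNSP {V : Type*} [Fintype V] (G : SimpleGraph V)
    (hT : G.IsTree) (v₁ v₂ v₃ v₄ v₅ : V)
    (hdistinct : List.Pairwise (· ≠ ·) [v₁, v₂, v₃, v₄, v₅])
    (h₁ : G.neighborSet v₁ = {v₂})
    (h₂ : G.neighborSet v₂ = {v₁, v₃})
    (h₄ : G.neighborSet v₄ = {v₃, v₅})
    (h₅ : G.neighborSet v₅ = {v₄}) :
    G.HasNSP := by
  have hpath : IsPendantTwoPath G v₁ v₂ v₃ := ⟨h₁, h₂, by grind⟩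
  have hpath' : IsPendantTwoPath G v₅ v₄ v₃ := ⟨h₅, h₄.trans (Set.pair_comm v₃ v₅), by grind⟩
  exact tree_with_pendant_paths_hasNSP_general hpath hpath' (by grind)
end

section
/- For every integer n ≥ 5, there exists a tree on n vertices that satisfies the neighbour sum property. -/
/-!
The path on five vertices has the neighbour sum property through the values `1, 1, 0, -1, -1`.
A leaf attached to a vertex of value `0` may itself be given the value `0`: it sees only that
vertex, and it contributes nothing there. Attaching `n - 5` leaves to the middle of the path
therefore gives a tree on `n` vertices with the neighbour sum property.
-/

open SimpleGraph

variable {V W ι M : Type*}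

section Acyclic

lemma neighborSet_nontrivial_of_mem_support_of_isCycle {G : SimpleGraph V} {u v : V}
    {c : G.Walk v v} (hc : c.IsCycle) (hu : u ∈ c.support) : (G.neighborSet u).Nontrivial := by
  classical
  have hrot : (c.rotate u hu).IsCycle := hc.rotate hu
  exact ⟨_, (c.rotate u hu).adj_snd hrot.not_nil, _,
    ((c.rotate u hu).adj_penultimate hrot.not_nil).symm, hrot.snd_ne_penultimate⟩

lemma isAcyclic_of_induce_of_subsingleton_neighborSet {G : SimpleGraph V} {s : Set V}
    (hG : (G.induce s).IsAcyclic) (hs : ∀ v ∉ s, (G.neighborSet v).Subsingleton) :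
    G.IsAcyclic := by
  intro v c hc
  have hcs : ∀ u ∈ c.support, u ∈ s := fun u hu ↦ by_contra fun hus ↦
    Set.not_subsingleton_iff.mpr (neighborSet_nontrivial_of_mem_support_of_isCycle hc hu) (hs u hus)
  refine hG (c.induce s hcs) (.of_map (f := (Embedding.induce s).toHom) ?_)
  rwa [Walk.map_induce]

lemma card_edgeSet_pathGraph_le (n : ℕ) : Nat.card (pathGraph (n + 1)).edgeSet ≤ n := by
  have hsub : (pathGraph (n + 1)).edgeSet ⊆ Set.range fun i : Fin n ↦ s(i.castSucc, i.succ) := by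
    rintro ⟨i, j⟩ (hij : (pathGraph (n + 1)).Adj i j)
    rcases pathGraph_adj.mp hij with h | h
    · exact ⟨⟨i, by lia⟩, Sym2.eq_iff.mpr (.inl ⟨rfl, Fin.ext h⟩)⟩
    · exact ⟨⟨j, by lia⟩, Sym2.eq_iff.mpr (.inr ⟨rfl, Fin.ext h⟩)⟩
  calc Nat.card (pathGraph (n + 1)).edgeSet
      ≤ Nat.card (Set.range fun i : Fin n ↦ s(i.castSucc, i.succ)) :=
        Nat.card_mono (Set.toFinite _) hsub
    _ ≤ Nat.card (Fin n) := Finite.card_range_le _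
    _ = n := Nat.card_fin n

lemma isTree_pathGraph (n : ℕ) : (pathGraph (n + 1)).IsTree := by
  have hconn := pathGraph_connected n
  refine isTree_iff_connected_and_card.mpr ⟨hconn, le_antisymm ?_
    hconn.card_vert_le_card_edgeSet_add_one⟩
  rw [Nat.card_fin]
  exact Nat.succ_le_succ (card_edgeSet_pathGraph_le n)

end Acyclic

section AttachLeaves

/-- The graph obtained from `G` by attaching, for each `i : ι`, a new leaf `Sum.inr i` to the
vertex `a i`. -/
def attachLeaves (G : SimpleGraph V) (a : ι → V) : SimpleGraph (V ⊕ ι) where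
  Adj
    | .inl u, .inl v => G.Adj u v
    | .inl v, .inr i => a i = v
    | .inr i, .inl v => a i = v
    | .inr _, .inr _ => False
  symm.symm
    | .inl _, .inl _ => G.adj_symm
    | .inl _, .inr _ | .inr _, .inl _ | .inr _, .inr _ => id
  loopless.irrefl
    | .inl _ => G.irrefl
    | .inr _ => id

variable {G : SimpleGraph V} (a : ι → V)

variable (G) in
/-- `G` as an induced subgraph of `attachLeaves G a`. -/
def attachLeavesEmbedding : G ↪g attachLeaves G a where
  toEmbedding := .inl
  map_rel_iff' := .rfl

lemma neighborSet_attachLeaves_inl (v : V) :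
    (attachLeaves G a).neighborSet (.inl v) =
      Sum.inl '' G.neighborSet v ∪ Sum.inr '' (a ⁻¹' {v}) := by
  ext (w | i) <;> simp [attachLeaves]

lemma neighborSet_attachLeaves_inr (i : ι) :
    (attachLeaves G a).neighborSet (.inr i) = {.inl (a i)} := by
  ext (w | j) <;> simp [attachLeaves, eq_comm]

lemma connected_attachLeaves (hG : G.Connected) : (attachLeaves G a).Connected := by
  have hold (u v : V) : (attachLeaves G a).Reachable (.inl u) (.inl v) :=
    (hG u v).map (attachLeavesEmbedding G a).toHom
  have hleaf (i : ι) : (attachLeaves G a).Reachable (.inr i) (.inl (a i)) :=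
    Adj.reachable (G := attachLeaves G a) rfl
  obtain ⟨r⟩ := hG.nonempty
  refine connected_iff_exists_forall_reachable _ |>.mpr ⟨.inl r, ?_⟩
  rintro (v | i)
  · exact hold r v
  · exact (hold r (a i)).trans (hleaf i).symm

lemma isAcyclic_attachLeaves (hG : G.IsAcyclic) : (attachLeaves G a).IsAcyclic := by
  refine isAcyclic_of_induce_of_subsingleton_neighborSet
    ((attachLeavesEmbedding G a).isoInduceRange.isAcyclic_iff.mp hG) ?_
  rintro (v | i) hv
  · exact absurd ⟨v, rfl⟩ hv
  · rw [neighborSet_attachLeaves_inr]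
    exact Set.subsingleton_singleton

lemma isTree_attachLeaves (hG : G.IsTree) : (attachLeaves G a).IsTree :=
  ⟨connected_attachLeaves a hG.connected, isAcyclic_attachLeaves a hG.isAcyclic⟩

end AttachLeaves

section NeighbourSum

variable [AddCommMonoid M]

/-- The value of `f` at each vertex of `G` is the sum of its values at the neighbours: `f` is a
witness of the neighbour sum property, except that it may vanish identically. As in
`SimpleGraph.HasNSP`, the sum is a `finsum`, hence `0` when it has infinitely many nonzero terms. -/
def IsNeighbourSum (G : SimpleGraph V) (f : V → M) : Prop :=
  ∀ x, f x = ∑ᶠ y ∈ G.neighborSet x, f y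

lemma IsNeighbourSum.comp_iso {G : SimpleGraph V} {H : SimpleGraph W} {f : W → M}
    (hf : IsNeighbourSum H f) (e : G ≃g H) : IsNeighbourSum G (f ∘ e) := by
  intro x
  have himage : e '' G.neighborSet x = H.neighborSet (e x) := e.image_neighborSet
  rw [Function.comp_apply, hf (e x), ← himage, finsum_mem_image e.injective.injOn]
  rfl

lemma isNeighbourSum_attachLeaves {G : SimpleGraph V} {f : V → M} (hf : IsNeighbourSum G f)
    {a : ι → V} (ha : ∀ i, f (a i) = 0) :
    IsNeighbourSum (attachLeaves G a) (Sum.elim f 0) := by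
  rintro (v | i)
  · have hleaves : ∀ y ∈ Function.support (Sum.elim f (0 : ι → M)),
        y ∈ (attachLeaves G a).neighborSet (.inl v) ↔ y ∈ Sum.inl '' G.neighborSet v := by
      rintro (w | j) hy
      · simp [neighborSet_attachLeaves_inl]
      · exact absurd rfl hy
    rw [finsum_mem_inter_support_eq' _ _ _ hleaves, finsum_mem_image Sum.inl_injective.injOn]
    exact hf v
  · rw [neighborSet_attachLeaves_inr, finsum_mem_singleton]
    exact (ha i).symm

lemma isNeighbourSum_pathGraph_five {A : Type*} [AddCommGroup A] (a : A) :
    IsNeighbourSum (pathGraph 5) ![a, a, 0, -a, -a] := by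
  classical
  intro x
  simp_rw [finsum_eq_if, finsum_eq_sum_of_fintype, Fin.sum_univ_five, mem_neighborSet,
    pathGraph_adj]
  fin_cases x <;> simp

end NeighbourSum

/-- For every `n ≥ 5`, there exists a tree on `n` vertices satisfying the neighbour
sum property. -/
theorem exists_tree_hasNSP (n : ℕ) (hn : 5 ≤ n) :
    ∃ G : SimpleGraph (Fin n), G.IsTree ∧ G.HasNSP := by
  let T := attachLeaves (pathGraph 5) fun _ : Fin (n - 5) ↦ 2
  have hcard : Fintype.card (Fin 5 ⊕ Fin (n - 5)) = n := by simp [hn]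
  let e : T ≃g T.overFin hcard := T.overFinIso hcard
  have hT : T.IsTree := isTree_attachLeaves _ (isTree_pathGraph 4)
  have hf : IsNeighbourSum T (Sum.elim ![(1 : ℝ), 1, 0, -1, -1] 0) :=
    isNeighbourSum_attachLeaves (isNeighbourSum_pathGraph_five 1) fun _ ↦ rfl
  refine ⟨T.overFin hcard, e.isTree_iff.mp hT, _, fun h ↦ ?_, hf.comp_iso e.symm⟩
  simpa using congrFun h (e (.inl 0))
end

section
/- Let T = (V, E) be an infinite, locally finite tree and suppose there is a vertex v_0 ∈ V such that every vertex v ∈ V has at least one neighbour u with dist(v_0, u) = dist(v_0, v) + 1 and deg(u) ≥ 2 (i.e., every vertex has at least one child, relative to the root v_0, that is not a leaf). Then T satisfies the neighbour sum property. -/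
/-!
Choose a child `c v` of every vertex `v` and prescribe `f` outwards from the root: start with any
value at `v₀`, give `c v` the one value that makes the neighbour sum at `v` correct, namely `f v`
minus the value at the parent of `v` (nothing is subtracted at the root), and give every child
that was not chosen the value `0`. Since the parent of a vertex of a tree is unique, no vertex
receives two values.
-/

/-- The children of `v` in the graph `G` rooted at `v₀`: the neighbours of `v` that are one step
further from the root. -/
def childSet {V : Type*} (G : SimpleGraph V) (v₀ v : V) : Set V :=
  {u | G.Adj v u ∧ G.dist v₀ u = G.dist v₀ v + 1}

section Children

variable {V : Type*} {G : SimpleGraph V} {v₀ v w u : V}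

lemma notMem_childSet_of_mem_childSet (h : u ∈ childSet G v₀ v) : v ∉ childSet G v₀ u := by
  rintro ⟨-, hdist⟩
  have := h.2
  omega

lemma reachable_of_mem_childSet (h : u ∈ childSet G v₀ v) : G.Reachable v₀ u :=
  .of_dist_ne_zero (h.2 ▸ Nat.succ_ne_zero _)

lemma exists_mem_childSet (h : G.Reachable v₀ u) (hu : u ≠ v₀) : ∃ v, u ∈ childSet G v₀ v := by
  obtain ⟨p, hp⟩ := h.exists_walk_length_eq_dist
  have hnil : ¬ p.Nil := SimpleGraph.Walk.not_nil_of_ne hu.symm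
  have hsub : p.dropLast.IsSubwalk p := p.isSubwalk_rfl.dropLast
  have hdist : p.dropLast.length = G.dist v₀ p.penultimate :=
    SimpleGraph.length_eq_dist_of_subwalk hp hsub
  refine ⟨p.penultimate, p.adj_penultimate hnil, ?_⟩
  rw [← hp, ← hdist, SimpleGraph.Walk.length_dropLast_add_one hnil]

lemma neighborSet_root_eq_childSet : G.neighborSet v₀ = childSet G v₀ v₀ := by
  ext u
  refine ⟨fun h => ⟨h, ?_⟩, fun h => h.1⟩
  rw [SimpleGraph.dist_self, SimpleGraph.dist_eq_one_iff_adj.mpr h]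

lemma length_eq_dist_of_isAcyclic (hG : G.IsAcyclic) {p : G.Walk v w} (hp : p.IsPath) :
    p.length = G.dist v w := by
  obtain ⟨q, hq, hlen⟩ := p.reachable.exists_path_of_dist
  have : p = q := congrArg Subtype.val ((hG.subsingleton_path v w).elim ⟨p, hp⟩ ⟨q, hq⟩)
  rw [this, hlen]

lemma eq_concat_of_mem_childSet (hG : G.IsAcyclic) {p : G.Walk v₀ v} {q : G.Walk v₀ u}
    (hp : p.IsPath) (hq : q.IsPath) (hu : u ∈ childSet G v₀ v) : q = p.concat hu.1 := by
  have hconcat : (p.concat hu.1).IsPath := SimpleGraph.Walk.isPath_of_length_eq_dist _ <| by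
    rw [SimpleGraph.Walk.length_concat, length_eq_dist_of_isAcyclic hG hp, hu.2]
  exact congrArg Subtype.val ((hG.subsingleton_path v₀ u).elim ⟨q, hq⟩ ⟨_, hconcat⟩)

lemma eq_of_mem_childSet (hG : G.IsAcyclic) (hv : u ∈ childSet G v₀ v)
    (hw : u ∈ childSet G v₀ w) : v = w := by
  have hu : G.Reachable v₀ u := reachable_of_mem_childSet hv
  obtain ⟨q, hq, -⟩ := hu.exists_path_of_dist
  have penultimate_eq {x : V} (hx : u ∈ childSet G v₀ x) : q.penultimate = x := by
    obtain ⟨p, hp, -⟩ := (hu.trans hx.1.symm.reachable).exists_path_of_dist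
    rw [eq_concat_of_mem_childSet hG hp hq hx, SimpleGraph.Walk.penultimate_concat]
  rw [← penultimate_eq hv, penultimate_eq hw]

lemma neighborSet_eq_insert_childSet (hG : G.IsAcyclic) (hv : v ∈ childSet G v₀ w) :
    G.neighborSet v = insert w (childSet G v₀ v) := by
  ext u
  constructor
  · intro (hadj : G.Adj v u)
    rcases hG.dist_eq_dist_add_one_of_adj_of_reachable v₀ hadj (reachable_of_mem_childSet hv)
      with hcloser | hfarther
    · exact .inl (eq_of_mem_childSet hG ⟨hadj.symm, hcloser⟩ hv)
    · exact .inr ⟨hadj, hfarther⟩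
  · rintro (rfl | hu)
    · exact hv.1.symm
    · exact hu.1

end Children

section Recursion

variable {V : Type*} {G : SimpleGraph V}

lemma exists_childSet_recursion {β : Type*} (hT : G.IsTree) (v₀ : V) (b : β)
    (step : V → V → β → β) :
    ∃ g : V → β, g v₀ = b ∧ ∀ v, ∀ u ∈ childSet G v₀ v, g u = step v u (g v) := by
  choose path hpath using fun v => (hT.existsUnique_path v₀ v).exists
  have hroot : path v₀ = .nil :=
    SimpleGraph.Walk.eq_nil_iff_nil.mpr (SimpleGraph.Walk.isPath_iff_nil.mp (hpath v₀))
  refine ⟨fun v => (path v).darts.foldl (fun x d => step d.fst d.snd x) b, ?_, fun v u hu => ?_⟩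
  · simp only [hroot, SimpleGraph.Walk.darts_nil, List.foldl_nil]
  · simp only [eq_concat_of_mem_childSet hT.isAcyclic (hpath v) (hpath u) hu,
      SimpleGraph.Walk.darts_concat, List.concat_eq_append, List.foldl_append, List.foldl_cons,
      List.foldl_nil]

/-- The function `above` is the value of `f` at the parent, and `0` at the root. Carrying it along
makes the recursion first-order and removes the case distinction at the root. -/
lemma exists_childSet_sub_recursion {M : Type*} [Zero M] [Sub M] (hT : G.IsTree) (v₀ : V)
    {c : V → V} (hc : ∀ v, c v ∈ childSet G v₀ v) (a : M) :
    ∃ f above : V → M, f v₀ = a ∧ above v₀ = 0 ∧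
      (∀ v, ∀ u ∈ childSet G v₀ v, above u = f v) ∧
      (∀ v, f (c v) = f v - above v) ∧
      ∀ v, ∀ u ∈ childSet G v₀ v, u ≠ c v → f u = 0 := by
  classical
  obtain ⟨g, hroot, hg⟩ := exists_childSet_recursion hT v₀ (a, (0 : M))
    fun v u x => (if u = c v then x.1 - x.2 else 0, x.1)
  refine ⟨fun v => (g v).1, fun v => (g v).2, ?_, ?_, fun v u hu => ?_, fun v => ?_,
    fun v u hu hne => ?_⟩
  · simp only [hroot]
  · simp only [hroot]
  · simp only [hg v u hu]
  · simp only [hg v _ (hc v), if_true]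
  · simp only [hg v u hu, if_neg hne]

end Recursion

lemma finsum_mem_eq_of_forall_ne {α M : Type*} [AddCommMonoid M] {f : α → M} {s : Set α} {a : α}
    (ha : a ∈ s) (hs : ∀ x ∈ s, x ≠ a → f x = 0) : ∑ᶠ x ∈ s, f x = f a := by
  rw [finsum_mem_inter_support_eq' f s {a}, finsum_mem_singleton]
  exact fun x hx => ⟨fun hxs => not_not.mp (mt (hs x hxs) hx), fun hxa => hxa ▸ ha⟩

/-- The finiteness clause ensures that, at vertices of infinite degree, the `finsum` is a genuine
sum and not the junk value `0`. -/
theorem infinite_tree_hasNSP_general {V M : Type*} [AddCommGroup M] {G : SimpleGraph V}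
    (hT : G.IsTree) (v₀ : V) (hchild : ∀ v, (childSet G v₀ v).Nonempty) (a : M) :
    ∃ f : V → M, f v₀ = a ∧ ∀ v, (G.neighborSet v ∩ Function.support f).Finite ∧
      f v = ∑ᶠ u ∈ G.neighborSet v, f u := by
  choose c hc using hchild
  obtain ⟨f, above, hroot, habove_root, habove, hchosen, hother⟩ :=
    exists_childSet_sub_recursion hT v₀ hc a
  have hfin (v : V) : (childSet G v₀ v ∩ Function.support f).Finite :=
    (Set.finite_singleton (c v)).subset fun u hu => not_not.mp (mt (hother v u hu.1) hu.2)
  have hsum (v : V) : ∑ᶠ u ∈ childSet G v₀ v, f u = f v - above v := by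
    rw [finsum_mem_eq_of_forall_ne (hc v) (hother v), hchosen]
  refine ⟨f, hroot, fun v => ?_⟩
  by_cases hv : v = v₀
  · subst hv
    rw [neighborSet_root_eq_childSet, hsum, habove_root, sub_zero]
    exact ⟨hfin v, rfl⟩
  · obtain ⟨w, hw⟩ := exists_mem_childSet (hT.connected v₀ v) hv
    rw [neighborSet_eq_insert_childSet hT.isAcyclic hw,
      finsum_mem_insert' f (notMem_childSet_of_mem_childSet hw) (hfin v), hsum, habove w v hw,
      add_sub_cancel]
    exact ⟨((hfin v).insert w).subset fun u ⟨hu, hne⟩ => hu.imp_right (⟨·, hne⟩), rfl⟩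

/-- Let `T` be an infinite, locally finite tree with a root `v₀` such that every vertex
`v` has at least one neighbour `u` with `dist v₀ u = dist v₀ v + 1` and `deg u ≥ 2`
(i.e. a child, relative to `v₀`, that is not a leaf).  Then `T` satisfies the
neighbour sum property. -/
theorem infinite_tree_hasNSP {V : Type*} [Infinite V] (G : SimpleGraph V)
    (hT : G.IsTree) (hlf : ∀ v : V, (G.neighborSet v).Finite) (v₀ : V)
    (hchild : ∀ v : V, ∃ u : V, G.Adj v u ∧ G.dist v₀ u = G.dist v₀ v + 1 ∧
      2 ≤ (G.neighborSet u).ncard) :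
    G.HasNSP := by
  obtain ⟨f, hroot, hf⟩ := infinite_tree_hasNSP_general hT v₀
    (fun v => (hchild v).imp fun _ hu => ⟨hu.1, hu.2.1⟩) (1 : ℝ)
  exact ⟨f, fun h => one_ne_zero (hroot.symm.trans (congrFun h v₀)), fun v => (hf v).2⟩
end

section
/- Let G be the simple graph with vertex set ℤ × {0, 1, 2} whose edges are exactly {(n,0), (n+1,0)}, {(n,0), (n,1)}, and {(n,1), (n,2)} for every n ∈ ℤ. Then G is an infinite, locally finite tree, and every function f : ℤ × {0,1,2} → ℝ satisfying f(x) = Σ_{y adjacent to x} f(y) for all vertices x is identically zero; in particular, G does not satisfy the neighbour sum property. -/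
/-- The graph on `ℤ × {0, 1, 2}` whose edges are exactly `{(n,0), (n+1,0)}`,
`{(n,0), (n,1)}` and `{(n,1), (n,2)}` for every `n ∈ ℤ`: a doubly infinite path with a
pendant path of length two attached at every vertex. -/
def combGraph : SimpleGraph (ℤ × Fin 3) :=
  SimpleGraph.fromRel (fun p q =>
    (p.2 = 0 ∧ q.2 = 0 ∧ q.1 = p.1 + 1) ∨
    (p.2 = 0 ∧ q.2 = 1 ∧ q.1 = p.1) ∨
    (p.2 = 1 ∧ q.2 = 2 ∧ q.1 = p.1))

section

open SimpleGraph

section Bridge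

variable {V : Type*} {G : SimpleGraph V} {u v : V}

lemma isBridge_of_forall_adj_eq {α : Type*} (f : V → α) (huv : f u ≠ f v)
    (hf : ∀ x y, G.Adj x y → s(x, y) ≠ s(u, v) → f x = f y) : G.IsBridge s(u, v) := by
  rw [isBridge_iff]
  rintro ⟨w⟩
  obtain ⟨d, -, hfst, hsnd⟩ := w.exists_boundary_dart {x | f x = f u} rfl huv.symm
  obtain ⟨hadj, hne⟩ := deleteEdges_adj.1 d.adj
  exact hsnd ((hf _ _ hadj hne).symm.trans hfst)

lemma exists_forall_adj_eq_of_isBridge (h : G.IsBridge s(u, v)) :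
    ∃ f : V → (G.deleteEdges {s(u, v)}).ConnectedComponent, f u ≠ f v ∧
      ∀ x y, G.Adj x y → s(x, y) ≠ s(u, v) → f x = f y :=
  ⟨connectedComponentMk _, fun huv ↦ isBridge_iff.1 h (ConnectedComponent.exact huv),
    fun _ _ hadj hne ↦ ConnectedComponent.sound (deleteEdges_adj.2 ⟨hadj, hne⟩).reachable⟩

end Bridge

section Hasse

variable {α : Type*} [LinearOrder α]

lemma isBridge_hasse_of_covBy {a b : α} (hab : a ⋖ b) : (hasse α).IsBridge s(a, b) := by
  refine isBridge_of_forall_adj_eq (· ≤ a) (by simpa using hab.lt) ?_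
  have key {x y : α} (hxy : x ⋖ y) (hne : s(x, y) ≠ s(a, b)) : (x ≤ a) = (y ≤ a) := by
    refine propext ⟨fun hxa ↦ ?_, hxy.le.trans⟩
    by_contra! hay
    obtain rfl : x = a := hxa.antisymm (hxy.le_of_lt hay)
    exact hne (by rw [hxy.unique_right hab])
  rintro x y (hxy | hyx) hne
  · exact key hxy hne
  · exact (key hyx (Sym2.eq_swap ▸ hne)).symm

variable (α) in
lemma hasse_isAcyclic : (hasse α).IsAcyclic := by
  rw [isAcyclic_iff_forall_adj_isBridge]
  rintro a b (hab | hba)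
  · exact isBridge_hasse_of_covBy hab
  · exact Sym2.eq_swap ▸ isBridge_hasse_of_covBy hba

variable (α) in
lemma hasse_isTree [Nonempty α] [SuccOrder α] [IsSuccArchimedean α] : (hasse α).IsTree :=
  ⟨⟨hasse_preconnected_of_succ α⟩, hasse_isAcyclic α⟩

lemma finite_neighborSet_hasse (a : α) : ((hasse α).neighborSet a).Finite := by
  have hright : {b | a ⋖ b}.Subsingleton := fun _ hb _ hc ↦ CovBy.unique_right hb hc
  have hleft : {b | b ⋖ a}.Subsingleton := fun _ hb _ hc ↦ CovBy.unique_left hb hc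
  exact hright.finite.union hleft.finite

end Hasse

/-- The rooted product of `G` with the graph `H` rooted at `r`: a copy of `H` is attached to each
vertex `v` of `G`, with `v` identified with the root `(v, r)` of the copy `{v} × W`. -/
def rootedProd {V W : Type*} (G : SimpleGraph V) (H : SimpleGraph W) (r : W) :
    SimpleGraph (V × W) where
  Adj p q := (G.Adj p.1 q.1 ∧ p.2 = r ∧ q.2 = r) ∨ (p.1 = q.1 ∧ H.Adj p.2 q.2)
  symm := ⟨fun _ _ ↦ Or.imp (fun h ↦ ⟨h.1.symm, h.2.2, h.2.1⟩) (fun h ↦ ⟨h.1.symm, h.2.symm⟩)⟩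
  loopless := ⟨fun _ ↦ Or.rec (fun h ↦ h.1.ne rfl) (fun h ↦ h.2.ne rfl)⟩

section RootedProd

variable {V W : Type*} {G : SimpleGraph V} {H : SimpleGraph W} {r : W}

lemma rootedProd_adj {p q : V × W} : (rootedProd G H r).Adj p q ↔
    (G.Adj p.1 q.1 ∧ p.2 = r ∧ q.2 = r) ∨ (p.1 = q.1 ∧ H.Adj p.2 q.2) :=
  Iff.rfl

lemma rootedProd_reachable_of_left {u v : V} (h : G.Reachable u v) :
    (rootedProd G H r).Reachable (u, r) (v, r) :=
  h.map ⟨(·, r), fun hadj ↦ Or.inl ⟨hadj, rfl, rfl⟩⟩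

lemma rootedProd_reachable_of_right (v : V) {w x : W} (h : H.Reachable w x) :
    (rootedProd G H r).Reachable (v, w) (v, x) :=
  h.map ⟨(v, ·), fun hadj ↦ Or.inr ⟨rfl, hadj⟩⟩

lemma rootedProd_connected (hG : G.Connected) (hH : H.Connected) :
    (rootedProd G H r).Connected := by
  obtain ⟨u⟩ := hG.nonempty
  refine (connected_iff_exists_forall_reachable _).2 ⟨(u, r), fun ⟨v, w⟩ ↦ ?_⟩
  exact (rootedProd_reachable_of_left (hG.preconnected u v)).trans
    (rootedProd_reachable_of_right v (hH.preconnected r w))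

lemma rootedProd_isBridge_left {u v : V} (h : G.IsBridge s(u, v)) :
    (rootedProd G H r).IsBridge s((u, r), (v, r)) := by
  obtain ⟨f, huv, hf⟩ := exists_forall_adj_eq_of_isBridge h
  refine isBridge_of_forall_adj_eq (fun p ↦ f p.1) huv ?_
  rintro ⟨a, w⟩ ⟨b, x⟩ (⟨hab, rfl, rfl⟩ | ⟨rfl, -⟩) hne
  · exact hf a b hab (by simpa using hne)
  · rfl

lemma rootedProd_isBridge_right (v : V) {w x : W} (h : H.IsBridge s(w, x)) :
    (rootedProd G H r).IsBridge s((v, w), (v, x)) := by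
  classical
  obtain ⟨f, hwx, hf⟩ := exists_forall_adj_eq_of_isBridge h
  -- Retract the rooted product onto the copy of `H` at `v`, collapsing every other copy to `r`.
  refine isBridge_of_forall_adj_eq (fun p ↦ f (if p.1 = v then p.2 else r)) (by simpa using hwx) ?_
  rintro ⟨a, y⟩ ⟨b, z⟩ (⟨-, rfl, rfl⟩ | ⟨rfl, hyz⟩) hne
  · simp only [ite_self]
  · by_cases hav : a = v
    · subst hav
      simpa using hf y z hyz (by simpa using hne)
    · simp only [if_neg hav]

lemma rootedProd_isAcyclic (hG : G.IsAcyclic) (hH : H.IsAcyclic) :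
    (rootedProd G H r).IsAcyclic := by
  rw [isAcyclic_iff_forall_adj_isBridge] at hG hH ⊢
  rintro ⟨a, w⟩ ⟨b, x⟩ (⟨hab, rfl, rfl⟩ | ⟨rfl, hwx⟩)
  · exact rootedProd_isBridge_left (hG hab)
  · exact rootedProd_isBridge_right a (hH hwx)

lemma rootedProd_isTree (hG : G.IsTree) (hH : H.IsTree) : (rootedProd G H r).IsTree :=
  ⟨rootedProd_connected hG.connected hH.connected, rootedProd_isAcyclic hG.isAcyclic hH.isAcyclic⟩

lemma finite_neighborSet_rootedProd {p : V × W} (hG : (G.neighborSet p.1).Finite)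
    (hH : (H.neighborSet p.2).Finite) : ((rootedProd G H r).neighborSet p).Finite := by
  refine ((hG.prod (Set.finite_singleton r)).union
    ((Set.finite_singleton p.1).prod hH)).subset ?_
  rintro q (⟨hadj, -, hq⟩ | ⟨hpq, hadj⟩)
  · exact Or.inl ⟨hadj, hq⟩
  · exact Or.inr ⟨hpq.symm, hadj⟩

end RootedProd

/-- The neighbour-sum equations for `f` on `G`. As in `SimpleGraph.HasNSP` the sum is a `finsum`,
which takes the junk value `0` at a vertex with infinitely many neighbours outside the zeros of `f`.
-/
def IsNeighborSum {V M : Type*} [AddCommMonoid M] (G : SimpleGraph V) (f : V → M) : Prop :=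
  ∀ x, f x = ∑ᶠ y ∈ G.neighborSet x, f y

section NeighborSum

variable {V M : Type*} {G : SimpleGraph V}

lemma IsNeighborSum.apply_eq_of_neighborSet_eq_singleton [AddCommMonoid M] {f : V → M}
    (hf : IsNeighborSum G f) {l a : V} (hl : G.neighborSet l = {a}) : f l = f a := by
  rw [hf l, hl, finsum_mem_singleton]

variable [AddCancelCommMonoid M]

lemma IsNeighborSum.eq_zero_of_pendant_path {f : V → M} (hf : IsNeighborSum G f) {b a l : V}
    (hbl : b ≠ l) (ha : G.neighborSet a = {b, l}) (hl : G.neighborSet l = {a}) : f b = 0 := by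
  have hsum : f a = f b + f l := by rw [hf a, ha, finsum_mem_pair hbl]
  rwa [hf.apply_eq_of_neighborSet_eq_singleton hl, right_eq_add] at hsum

lemma neighborSet_rootedProd_pathGraph_three_one (v : V) :
    (rootedProd G (pathGraph 3) 0).neighborSet (v, 1) = {(v, 0), (v, 2)} := by
  ext ⟨u, i⟩
  fin_cases i <;> simp [rootedProd_adj, pathGraph_adj, eq_comm]

lemma neighborSet_rootedProd_pathGraph_three_two (v : V) :
    (rootedProd G (pathGraph 3) 0).neighborSet (v, 2) = {(v, 1)} := by
  ext ⟨u, i⟩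
  fin_cases i <;> simp [rootedProd_adj, pathGraph_adj, eq_comm]

lemma IsNeighborSum.eq_zero_of_rootedProd_pathGraph_three {f : V × Fin 3 → M}
    (hf : IsNeighborSum (rootedProd G (pathGraph 3) 0) f) : f = 0 := by
  have hroot (v : V) : f (v, 0) = 0 :=
    hf.eq_zero_of_pendant_path (by simp) (neighborSet_rootedProd_pathGraph_three_one v)
      (neighborSet_rootedProd_pathGraph_three_two v)
  have hmiddle (v : V) : f (v, 1) = 0 := by
    have hsum : ∑ᶠ q ∈ (rootedProd G (pathGraph 3) 0).neighborSet (v, 0), f q = f (v, 1) := by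
      rw [← finsum_mem_singleton (f := f) (a := (v, 1))]
      refine finsum_mem_inter_support_eq f _ _ ?_
      ext ⟨u, i⟩
      fin_cases i <;> simp [rootedProd_adj, pathGraph_adj, hroot, eq_comm]
    rw [← hsum, ← hf (v, 0), hroot v]
  have hleaf (v : V) : f (v, 2) = 0 :=
    (hf.apply_eq_of_neighborSet_eq_singleton
      (neighborSet_rootedProd_pathGraph_three_two v)).trans (hmiddle v)
  funext ⟨v, i⟩
  fin_cases i
  exacts [hroot v, hmiddle v, hleaf v]

theorem combGraph_not_hasNSP_general [Infinite V] (hG : G.IsTree)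
    (hfin : ∀ v, (G.neighborSet v).Finite) :
    Infinite (V × Fin 3) ∧
    (rootedProd G (pathGraph 3) 0).IsTree ∧
    (∀ p, ((rootedProd G (pathGraph 3) 0).neighborSet p).Finite) ∧
    (∀ f : V × Fin 3 → M, IsNeighborSum (rootedProd G (pathGraph 3) 0) f → f = 0) ∧
    ¬ (rootedProd G (pathGraph 3) 0).HasNSP :=
  ⟨inferInstance, rootedProd_isTree hG (hasse_isTree (Fin 3)),
    fun p ↦ finite_neighborSet_rootedProd (hfin p.1) (Set.toFinite _),
    fun _ hf ↦ hf.eq_zero_of_rootedProd_pathGraph_three,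
    fun ⟨_, hne, hf⟩ ↦ hne (IsNeighborSum.eq_zero_of_rootedProd_pathGraph_three hf)⟩

end NeighborSum

lemma combGraph_eq_rootedProd : combGraph = rootedProd (hasse ℤ) (pathGraph 3) 0 := by
  ext ⟨m, i⟩ ⟨n, j⟩
  simp only [combGraph, fromRel_adj, rootedProd_adj, hasse_adj, Order.covBy_iff_add_one_eq,
    pathGraph_adj, ne_eq, Prod.mk.injEq]
  grind

end

/-- `combGraph` is an infinite, locally finite tree, every function satisfying the
neighbour-sum equations on it is identically zero, and in particular it does not
satisfy the neighbour sum property. -/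
theorem combGraph_not_hasNSP :
    Infinite (ℤ × Fin 3) ∧
    combGraph.IsTree ∧
    (∀ v : ℤ × Fin 3, (combGraph.neighborSet v).Finite) ∧
    (∀ f : ℤ × Fin 3 → ℝ,
      (∀ x : ℤ × Fin 3, f x = ∑ᶠ y ∈ combGraph.neighborSet x, f y) → f = 0) ∧
    ¬ combGraph.HasNSP := by
  rw [combGraph_eq_rootedProd]
  exact combGraph_not_hasNSP_general (hasse_isTree ℤ) finite_neighborSet_hasse
end

section
/- For all integers m ≥ 1 and n ≥ 1, the complete bipartite graph K_{m,n} satisfies the neighbour sum property if and only if m = 1 and n = 1. -/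
open Fintype (card)

section

variable {V W : Type*}

lemma neighborSet_completeBipartiteGraph_inl (v : V) :
    (completeBipartiteGraph V W).neighborSet (.inl v) = Set.range Sum.inr := by
  ext (_ | _) <;> simp

lemma neighborSet_completeBipartiteGraph_inr (w : W) :
    (completeBipartiteGraph V W).neighborSet (.inr w) = Set.range Sum.inl := by
  ext (_ | _) <;> simp

lemma forall_eq_finsum_neighborSet_completeBipartiteGraph_iff {M : Type*} [AddCommMonoid M]
    {f : V ⊕ W → M} :
    (∀ x, f x = ∑ᶠ y ∈ (completeBipartiteGraph V W).neighborSet x, f y) ↔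
      (∀ v, f (.inl v) = ∑ᶠ w, f (.inr w)) ∧ ∀ w, f (.inr w) = ∑ᶠ v, f (.inl v) := by
  simp only [Sum.forall, neighborSet_completeBipartiteGraph_inl,
    neighborSet_completeBipartiteGraph_inr, finsum_mem_range Sum.inl_injective,
    finsum_mem_range Sum.inr_injective]

lemma card_mul_card_eq_one_of_eq_sum {M : Type*} [Fintype V] [Fintype W]
    [AddCancelCommMonoid M] [IsAddTorsionFree M] {f : V ⊕ W → M} (hf : f ≠ 0)
    (hl : ∀ v, f (.inl v) = ∑ w, f (.inr w)) (hr : ∀ w, f (.inr w) = ∑ v, f (.inl v)) :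
    card V * card W = 1 := by
  have sum_inl : ∑ v, f (.inl v) = card V • ∑ w, f (.inr w) :=
    Finset.sum_eq_card_nsmul fun v _ ↦ hl v
  have sum_inr : ∑ w, f (.inr w) = card W • ∑ v, f (.inl v) :=
    Finset.sum_eq_card_nsmul fun w _ ↦ hr w
  have sum_inl_ne_zero : ∑ v, f (.inl v) ≠ 0 := by
    intro h
    refine hf (funext (Sum.forall.2 ⟨fun v ↦ ?_, fun w ↦ ?_⟩))
    · rw [hl, sum_inr, h, nsmul_zero, Pi.zero_apply]
    · rw [hr, h, Pi.zero_apply]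
  apply (IsAddLeftRegular.all _).nsmul_injective sum_inl_ne_zero
  calc (card V * card W) • ∑ v, f (.inl v)
    _ = card V • card W • ∑ v, f (.inl v) := mul_nsmul' ..
    _ = ∑ v, f (.inl v) := by rw [← sum_inr, ← sum_inl]
    _ = 1 • ∑ v, f (.inl v) := (one_nsmul _).symm

end

theorem completeBipartite_hasNSP_iff_general (V W : Type*) [Fintype V] [Fintype W] :
    (completeBipartiteGraph V W).HasNSP ↔ card V = 1 ∧ card W = 1 := by
  simp only [SimpleGraph.HasNSP, forall_eq_finsum_neighborSet_completeBipartiteGraph_iff]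
  simp only [finsum_eq_sum_of_fintype]
  constructor
  · rintro ⟨f, hf, hl, hr⟩
    exact mul_eq_one.1 (card_mul_card_eq_one_of_eq_sum hf hl hr)
  · rintro ⟨hV, hW⟩
    have : Nonempty V := Fintype.card_pos_iff.1 (hV ▸ one_pos)
    exact ⟨1, one_ne_zero, by simp [hW], by simp [hV]⟩

/-- For all `m, n ≥ 1`, the complete bipartite graph `K_{m,n}` satisfies the neighbour
sum property if and only if `m = 1` and `n = 1`. -/
theorem completeBipartite_hasNSP_iff (m n : ℕ) (hm : 1 ≤ m) (hn : 1 ≤ n) :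
    (completeBipartiteGraph (Fin m) (Fin n)).HasNSP ↔ m = 1 ∧ n = 1 := by
  simpa only [Fintype.card_fin] using completeBipartite_hasNSP_iff_general (Fin m) (Fin n)
end

section
/- Let d ≥ 2 be an integer and define the integer sequence a_0 = 1, a_1 = 1 − d, and a_{n+2} = a_{n+1} − d·a_n for all n ≥ 0. Then a_n ≠ 0 for every n ≥ 0. -/
/-!
Modulo `d` the recurrence reads `a (n + 2) ≡ a (n + 1)` and the initial values are both `1`, so the
sequence is constantly `1` modulo `d`. A zero term would therefore force `d ∣ 1`.
-/

section Ring

variable {R : Type*} [Ring R] {d : R} {a : ℕ → R}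

theorem dvd_sub_apply_zero_of_dvd_succ_sub (h : ∀ n, d ∣ a (n + 1) - a n) (n : ℕ) :
    d ∣ a n - a 0 := by
  rw [← Finset.sum_range_sub]
  exact Finset.dvd_sum fun i _ ↦ h i

theorem convergent_numerators_dvd_succ_sub (h0 : a 0 = 1) (h1 : a 1 = 1 - d)
    (hrec : ∀ n, a (n + 2) = a (n + 1) - d * a n) : ∀ n, d ∣ a (n + 1) - a n
  | 0 => by simp [h0, h1]
  | n + 1 => by simp [hrec]

theorem convergent_numerators_dvd_sub_one (h0 : a 0 = 1) (h1 : a 1 = 1 - d)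
    (hrec : ∀ n, a (n + 2) = a (n + 1) - d * a n) (n : ℕ) : d ∣ a n - 1 :=
  h0 ▸ dvd_sub_apply_zero_of_dvd_succ_sub (convergent_numerators_dvd_succ_sub h0 h1 hrec) n

end Ring

theorem convergent_numerators_ne_zero_general {R : Type*} [CommRing R] {d : R} (hd : ¬IsUnit d)
    {a : ℕ → R} (h0 : a 0 = 1) (h1 : a 1 = 1 - d)
    (hrec : ∀ n, a (n + 2) = a (n + 1) - d * a n) (n : ℕ) : a n ≠ 0 := by
  intro hn
  have hdvd : d ∣ a n - 1 := convergent_numerators_dvd_sub_one h0 h1 hrec n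
  rw [hn, zero_sub, dvd_neg] at hdvd
  exact hd (isUnit_of_dvd_one hdvd)

/-- Let `d ≥ 2` be an integer and let `a₀ = 1`, `a₁ = 1 - d`,
`a_{n+2} = a_{n+1} - d·a_n`.  Then `a_n ≠ 0` for all `n`. -/
theorem convergent_numerators_ne_zero (d : ℤ) (hd : 2 ≤ d) (a : ℕ → ℤ)
    (h0 : a 0 = 1) (h1 : a 1 = 1 - d)
    (hrec : ∀ n : ℕ, a (n + 2) = a (n + 1) - d * a n) :
    ∀ n : ℕ, a n ≠ 0 := by
  have hunit : ¬IsUnit d := by rw [Int.isUnit_iff]; omega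
  exact convergent_numerators_ne_zero_general hunit h0 h1 hrec
end
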